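/- arXiv:1603.05627 — 3 statements merged into one kernel-verified Lean document; each statement's English description precedes it below -/
import Mathlib

section
/- Consider the SpGEMM instance with I = K = J = 2, S_A = [2]×[2] (a dense matrix), and S_B = {(1,1),(2,2)} (a diagonal matrix), so that V^m = {(1,1,1),(2,1,1),(1,2,2),(2,2,2)}. Then: (a) the partition of V^m into singletons belongs to ((𝒜 ∩ 𝒞) \ ℬ) \ ℛ; (b) the partition whose two parts are {(1,1,1),(2,1,1)} and {(1,2,2),(2,2,2)} (the fibers over pairs (k,j) ∈ S_B) belongs to (𝒜 ∩ ℬ ∩ 𝒞 ∩ ℒ) \ ℛ. -/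
/-- The multiplication set `V^m` of an SpGEMM instance with nonzero
structures `SA` and `SB`: triples `(i,k,j)` with `(i,k) ∈ SA` and `(k,j) ∈ SB`. -/
def Vm (SA SB : Set (ℕ × ℕ)) : Set (ℕ × ℕ × ℕ) :=
  {t | (t.1, t.2.1) ∈ SA ∧ (t.2.1, t.2.2) ∈ SB}

/-- `P` is a partition of the set `X`: its parts are nonempty subsets of `X`,
and every element of `X` lies in exactly one part. -/
def IsPartition {α : Type*} (X : Set α) (P : Set (Set α)) : Prop :=
  (∀ p ∈ P, p ⊆ X ∧ p.Nonempty) ∧ ∀ x ∈ X, ∃! p : Set α, p ∈ P ∧ x ∈ p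

/-- `x` and `y` lie in the same part of `P`. -/
def SamePart {α : Type*} (P : Set (Set α)) (x y : α) : Prop :=
  ∃ p ∈ P, x ∈ p ∧ y ∈ p

/-- `ℱ`: all parallelizations (partitions of `V^m`). -/
def classF (V : Set (ℕ × ℕ × ℕ)) : Set (Set (Set (ℕ × ℕ × ℕ))) :=
  {P | IsPartition V P}

/-- `ℛ`: row-wise parallelizations (equal first coordinate ⇒ same part). -/
def classR (V : Set (ℕ × ℕ × ℕ)) : Set (Set (Set (ℕ × ℕ × ℕ))) :=
  {P ∈ classF V | ∀ x ∈ V, ∀ y ∈ V, x.1 = y.1 → SamePart P x y}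

/-- `ℒ`: column-wise parallelizations (equal third coordinate ⇒ same part). -/
def classL (V : Set (ℕ × ℕ × ℕ)) : Set (Set (Set (ℕ × ℕ × ℕ))) :=
  {P ∈ classF V | ∀ x ∈ V, ∀ y ∈ V, x.2.2 = y.2.2 → SamePart P x y}

/-- `𝒰`: outer-product parallelizations (equal second coordinate ⇒ same part). -/
def classU (V : Set (ℕ × ℕ × ℕ)) : Set (Set (Set (ℕ × ℕ × ℕ))) :=
  {P ∈ classF V | ∀ x ∈ V, ∀ y ∈ V, x.2.1 = y.2.1 → SamePart P x y}

/-- `𝒜`: monochrome-A parallelizations (equal first two coordinates ⇒ same part). -/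
def classA (V : Set (ℕ × ℕ × ℕ)) : Set (Set (Set (ℕ × ℕ × ℕ))) :=
  {P ∈ classF V | ∀ x ∈ V, ∀ y ∈ V, x.1 = y.1 → x.2.1 = y.2.1 → SamePart P x y}

/-- `ℬ`: monochrome-B parallelizations (equal last two coordinates ⇒ same part). -/
def classB (V : Set (ℕ × ℕ × ℕ)) : Set (Set (Set (ℕ × ℕ × ℕ))) :=
  {P ∈ classF V | ∀ x ∈ V, ∀ y ∈ V, x.2 = y.2 → SamePart P x y}

/-- `𝒞`: monochrome-C parallelizations (equal outer coordinates ⇒ same part). -/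
def classC (V : Set (ℕ × ℕ × ℕ)) : Set (Set (Set (ℕ × ℕ × ℕ))) :=
  {P ∈ classF V | ∀ x ∈ V, ∀ y ∈ V, x.1 = y.1 → x.2.2 = y.2.2 → SamePart P x y}

/-- The partition of a set into singletons is a partition. -/
theorem isPartition_singletons {α : Type*} (X : Set α) :
    IsPartition X {p | ∃ t ∈ X, p = {t}} := by
  refine ⟨?_, fun x hx => ⟨{x}, ⟨⟨x, hx, rfl⟩, rfl⟩, ?_⟩⟩
  · rintro p ⟨t, ht, rfl⟩
    exact ⟨Set.singleton_subset_iff.2 ht, Set.singleton_nonempty t⟩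
  · rintro p ⟨⟨t, -, rfl⟩, hxt⟩
    rw [Set.mem_singleton_iff.1 hxt]

/-- Two elements share a part of the singleton partition iff they are equal. -/
theorem samePart_singletons_iff {α : Type*} {X : Set α} {x y : α} (hx : x ∈ X) :
    SamePart {p | ∃ t ∈ X, p = {t}} x y ↔ x = y := by
  constructor
  · rintro ⟨p, ⟨t, -, rfl⟩, hxt, hyt⟩
    exact hxt.trans hyt.symm
  · rintro rfl
    exact ⟨{x}, ⟨x, hx, rfl⟩, rfl, rfl⟩

/-- Two disjoint nonempty sets partition their union. -/
theorem isPartition_pair {α : Type*} {s t : Set α} (hs : s.Nonempty) (ht : t.Nonempty)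
    (hst : Disjoint s t) : IsPartition (s ∪ t) {s, t} := by
  have hdisj : ∀ x, x ∈ s → x ∉ t := fun _ hx => Set.disjoint_left.1 hst hx
  refine ⟨?_, ?_⟩
  · rintro p (rfl | rfl)
    · exact ⟨Set.subset_union_left, hs⟩
    · exact ⟨Set.subset_union_right, ht⟩
  · rintro x (hx | hx)
    · refine ⟨s, ⟨Or.inl rfl, hx⟩, ?_⟩
      rintro p ⟨rfl | rfl, hxp⟩
      · rfl
      · exact absurd hxp (hdisj x hx)
    · refine ⟨t, ⟨Or.inr rfl, hx⟩, ?_⟩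
      rintro p ⟨rfl | rfl, hxp⟩
      · exact absurd hx (hdisj x hxp)
      · rfl

/-- Sharing a part of a two-part partition means lying in the first or in the second part. -/
theorem samePart_pair_iff {α : Type*} {s t : Set α} {x y : α} :
    SamePart {s, t} x y ↔ (x ∈ s ∧ y ∈ s) ∨ (x ∈ t ∧ y ∈ t) := by
  simp [SamePart]

/-- The SpGEMM instance with `S_A = [2]×[2]` (dense) and
`S_B = {(1,1),(2,2)}` (diagonal): (a) the singleton partition belongs to
`((𝒜 ∩ 𝒞) \ ℬ) \ ℛ`; (b) the partition into the fibers over `(k,j) ∈ S_B`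
belongs to `(𝒜 ∩ ℬ ∩ 𝒞 ∩ ℒ) \ ℛ`. -/
theorem dense_times_diag_examples
    (SA SB : Set (ℕ × ℕ))
    (hSA : SA = Set.Icc 1 2 ×ˢ Set.Icc 1 2)
    (hSB : SB = {(1, 1), (2, 2)})
    (V : Set (ℕ × ℕ × ℕ)) (hV : V = Vm SA SB)
    (Psing P2 : Set (Set (ℕ × ℕ × ℕ)))
    (hPsing : Psing = {p | ∃ t ∈ V, p = {t}})
    (hP2 : P2 = {{(1, 1, 1), (2, 1, 1)}, {(1, 2, 2), (2, 2, 2)}}) :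
    V = {(1, 1, 1), (2, 1, 1), (1, 2, 2), (2, 2, 2)} ∧
    Psing ∈ ((classA V ∩ classC V) \ classB V) \ classR V ∧
    P2 ∈ (classA V ∩ classB V ∩ classC V ∩ classL V) \ classR V := by
  have hVeq : V = {(1, 1, 1), (2, 1, 1), (1, 2, 2), (2, 2, 2)} := by
    subst hSA hSB hV
    ext ⟨i, k, j⟩
    simp only [Vm, Set.mem_ofPred_eq, Set.mem_prod, Set.mem_Icc, Set.mem_insert_iff,
      Set.mem_singleton_iff, Prod.mk.injEq]
    omega
  have hsing : Psing ∈ classF V := hPsing ▸ isPartition_singletons V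
  have hpair : P2 ∈ classF V := by
    have hunion : V = {(1, 1, 1), (2, 1, 1)} ∪ {(1, 2, 2), (2, 2, 2)} := by
      rw [hVeq, Set.insert_union, Set.singleton_union]
    rw [hP2, hunion]
    exact isPartition_pair (Set.insert_nonempty _ _) (Set.insert_nonempty _ _) (by simp)
  have h111 : (1, 1, 1) ∈ V := by simp [hVeq]
  have h211 : (2, 1, 1) ∈ V := by simp [hVeq]
  have h122 : (1, 2, 2) ∈ V := by simp [hVeq]
  have hdiag : ∀ x ∈ V, x.2.1 = x.2.2 := by
    rw [hVeq]
    rintro x (rfl | rfl | rfl | rfl) <;> rfl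
  have hsame : ∀ x ∈ V, ∀ y ∈ V, x.2.2 = y.2.2 → SamePart P2 x y := by
    rw [hVeq, hP2]
    rintro x (rfl | rfl | rfl | rfl) y (rfl | rfl | rfl | rfl) <;> simp [samePart_pair_iff]
  refine ⟨hVeq, ⟨⟨⟨⟨hsing, ?_⟩, hsing, ?_⟩, ?_⟩, ?_⟩,
    ⟨⟨⟨⟨hpair, ?_⟩, hpair, ?_⟩, hpair, ?_⟩, hpair, hsame⟩, ?_⟩
  · intro x hx y hy h₁ h₂
    rw [hPsing, samePart_singletons_iff hx]
    exact Prod.ext h₁ (Prod.ext h₂ (by rw [← hdiag x hx, ← hdiag y hy, h₂]))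
  · intro x hx y hy h₁ h₃
    rw [hPsing, samePart_singletons_iff hx]
    exact Prod.ext h₁ (Prod.ext (by rw [hdiag x hx, hdiag y hy, h₃]) h₃)
  · rintro ⟨-, h⟩
    have := h _ h111 _ h211 rfl
    rw [hPsing, samePart_singletons_iff h111] at this
    simp at this
  · rintro ⟨-, h⟩
    have := h _ h111 _ h122 rfl
    rw [hPsing, samePart_singletons_iff h111] at this
    simp at this
  · exact fun x hx y hy _ h₂ => hsame x hx y hy (by rw [← hdiag x hx, ← hdiag y hy, h₂])
  · exact fun x hx y hy h => hsame x hx y hy (congrArg Prod.snd h)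
  · exact fun x hx y hy _ h => hsame x hx y hy h
  · rintro ⟨-, h⟩
    have := h _ h111 _ h122 rfl
    rw [hP2, samePart_pair_iff] at this
    simp at this
end

section
/- Let (V,E) be any member of the SpGEMM DAG family 𝒢(A,B), let U ⊆ V, and let D be any dominator set of U. Then |D| ≥ max( |{(i,k) ∈ S_A : ∃j, v_{ikj} ∈ U}| , |{(k,j) ∈ S_B : ∃i, v_{ikj} ∈ U}| ). -/
/-- The nonzero structure `S_C` of the output matrix. -/
def SC (SA SB : Set (ℕ × ℕ)) : Set (ℕ × ℕ) :=
  {p | ∃ k, (p.1, k) ∈ SA ∧ (k, p.2) ∈ SB}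

/-- A member of the SpGEMM DAG family `𝒢(A,B)`: a finite DAG whose vertices are
the pairwise distinct input vertices `v^A_{ik}` (`(i,k) ∈ S_A`) and `v^B_{kj}`
(`(k,j) ∈ S_B`), the multiplication vertices `v_{ikj}` (`(i,k,j) ∈ V^m`), and
the vertices of a summation tree `T_{ij}` for each `(i,j) ∈ S_C`; each `T_{ij}`
is a finite directed tree oriented toward a single root `root (i,j)`, whose
leaves (zero-indegree vertices) are exactly the multiplication vertices
`v_{ikj}`, and whose non-leaf vertices are distinct from the vertices of every
other tree and from all input and multiplication vertices.  The edges are the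
input edges `(v^A_{ik}, v_{ikj})` and `(v^B_{kj}, v_{ikj})` for
`(i,k,j) ∈ V^m` together with all summation-tree edges. -/
structure SpGEMMDag (SA SB : Set (ℕ × ℕ)) where
  /-- the vertex type -/
  V : Type
  /-- the DAG is finite -/
  finV : Finite V
  /-- the edge relation -/
  E : V → V → Prop
  /-- input vertices `v^A_{ik}` -/
  vA : ℕ × ℕ → V
  /-- input vertices `v^B_{kj}` -/
  vB : ℕ × ℕ → V
  /-- multiplication vertices `v_{ikj}` -/
  vm : ℕ × ℕ × ℕ → V
  /-- vertex set of the summation tree `T_{ij}` -/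
  tree : ℕ × ℕ → Set V
  /-- edge relation of the summation tree `T_{ij}` -/
  treeE : ℕ × ℕ → V → V → Prop
  /-- root of the summation tree `T_{ij}` -/
  root : ℕ × ℕ → V
  /-- the graph is acyclic -/
  acyclic : ∀ v : V, ¬ Relation.TransGen E v v
  /-- the `v^A` vertices are pairwise distinct -/
  vA_inj : Set.InjOn vA SA
  /-- the `v^B` vertices are pairwise distinct -/
  vB_inj : Set.InjOn vB SB
  /-- the multiplication vertices are pairwise distinct -/
  vm_inj : Set.InjOn vm (Vm SA SB)
  /-- the `v^A` and `v^B` vertices are distinct -/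
  vA_ne_vB : ∀ p ∈ SA, ∀ q ∈ SB, vA p ≠ vB q
  /-- input vertices `v^A` do not lie in any summation tree -/
  vA_notin_tree : ∀ p ∈ SA, ∀ q ∈ SC SA SB, vA p ∉ tree q
  /-- input vertices `v^B` do not lie in any summation tree -/
  vB_notin_tree : ∀ p ∈ SB, ∀ q ∈ SC SA SB, vB p ∉ tree q
  /-- distinct summation trees are vertex-disjoint -/
  trees_disjoint : ∀ p ∈ SC SA SB, ∀ q ∈ SC SA SB, p ≠ q → Disjoint (tree p) (tree q)
  /-- `v_{ikj}` is a vertex of `T_{ij}` -/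
  vm_mem_tree : ∀ t ∈ Vm SA SB, vm t ∈ tree (t.1, t.2.2)
  /-- `v_{ikj}` lies in no tree other than `T_{ij}` -/
  vm_mem_tree_only : ∀ t ∈ Vm SA SB, ∀ p ∈ SC SA SB, vm t ∈ tree p → p = (t.1, t.2.2)
  /-- every vertex is an input vertex or a summation-tree vertex (multiplication
  vertices are the leaves of the summation trees) -/
  vertex_cases : ∀ v : V, (∃ p ∈ SA, v = vA p) ∨ (∃ p ∈ SB, v = vB p) ∨
      (∃ p ∈ SC SA SB, v ∈ tree p)
  /-- the root of `T_{ij}` is a vertex of `T_{ij}` -/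
  root_mem : ∀ p ∈ SC SA SB, root p ∈ tree p
  /-- tree edges join vertices of their tree -/
  treeE_mem : ∀ p u v, treeE p u v → p ∈ SC SA SB ∧ u ∈ tree p ∧ v ∈ tree p
  /-- all tree edges are oriented toward the root: every non-root tree vertex
  has exactly one outgoing tree edge -/
  succ_unique : ∀ p ∈ SC SA SB, ∀ u ∈ tree p, u ≠ root p → ∃! v, treeE p u v
  /-- the root has no outgoing tree edge -/
  root_no_succ : ∀ p ∈ SC SA SB, ∀ v, ¬ treeE p (root p) v
  /-- the zero-indegree vertices (leaves) of `T_{ij}` are exactly the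
  multiplication vertices `v_{ikj}` -/
  leaves_iff : ∀ p ∈ SC SA SB, ∀ v ∈ tree p,
      ((∀ u, ¬ treeE p u v) ↔ ∃ k, (p.1, k, p.2) ∈ Vm SA SB ∧ v = vm (p.1, k, p.2))
  /-- the edge set consists exactly of the input edges and the tree edges -/
  edge_iff : ∀ u v, E u v ↔
      ((∃ t ∈ Vm SA SB, (u = vA (t.1, t.2.1) ∨ u = vB (t.2.1, t.2.2)) ∧ v = vm t) ∨
       (∃ p, treeE p u v))

/-- An input of the DAG: a vertex with no incoming edges. -/
def SpGEMMDag.IsInput {SA SB : Set (ℕ × ℕ)} (G : SpGEMMDag SA SB) (v : G.V) : Prop :=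
  ∀ u, ¬ G.E u v

/-- `D` is a dominator set of `U`: every directed path from an input to a
vertex of `U` contains a vertex of `D`. -/
def SpGEMMDag.IsDominator {SA SB : Set (ℕ × ℕ)} (G : SpGEMMDag SA SB)
    (U D : Set G.V) : Prop :=
  ∀ (a : G.V) (l : List G.V), List.Chain G.E a l → G.IsInput a →
    (a :: l).getLast (List.cons_ne_nil a l) ∈ U → ∃ d ∈ D, d ∈ a :: l

/-- The minimum set of `U`: elements of `U` with no successor in `U`. -/
def SpGEMMDag.minSet {SA SB : Set (ℕ × ℕ)} (G : SpGEMMDag SA SB)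
    (U : Set G.V) : Set G.V :=
  {u ∈ U | ∀ v, G.E u v → v ∉ U}

namespace SpGEMMDag

variable {SA SB : Set (ℕ × ℕ)} (G : SpGEMMDag SA SB)

theorem mem_SC_of_mem_Vm {t : ℕ × ℕ × ℕ} (ht : t ∈ Vm SA SB) : (t.1, t.2.2) ∈ SC SA SB :=
  ⟨t.2.1, ht⟩

theorem isInput_of_notin_tree {v : G.V} (hv : ∀ q ∈ SC SA SB, v ∉ G.tree q) : G.IsInput v := by
  intro u hu
  rcases (G.edge_iff u v).1 hu with ⟨t, ht, -, rfl⟩ | ⟨q, hq⟩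
  · exact hv _ (mem_SC_of_mem_Vm ht) (G.vm_mem_tree t ht)
  · obtain ⟨h, -, h'⟩ := G.treeE_mem q u v hq
    exact hv q h h'

/-- A dominator set meets every single-edge path from an input to a vertex of `U`. -/
theorem IsDominator.mem_or_mem {G : SpGEMMDag SA SB} {U D : Set G.V} (hD : G.IsDominator U D)
    {a v : G.V} (ha : G.IsInput a) (hav : G.E a v) (hv : v ∈ U) : a ∈ D ∨ v ∈ D := by
  obtain ⟨d, hd, hmem⟩ := hD a [v] (List.isChain_pair.2 hav) ha (by simpa using hv)
  simp only [List.mem_cons, List.not_mem_nil, or_false] at hmem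
  rcases hmem with rfl | rfl
  · exact Or.inl hd
  · exact Or.inr hd

/-- If `U` contains, for every index `p ∈ S`, a multiplication vertex `v_t` with `π t = p` that is
adjacent to the input `x p`, and the `x p` are distinct non-tree vertices, then any dominator set
of `U` has at least `|S|` elements. -/
theorem IsDominator.ncard_le {G : SpGEMMDag SA SB} {U D : Set G.V} (hD : G.IsDominator U D)
    {S : Set (ℕ × ℕ)} (x : ℕ × ℕ → G.V) (π : ℕ × ℕ × ℕ → ℕ × ℕ) (hx : Set.InjOn x S)
    (hxt : ∀ p ∈ S, ∀ q ∈ SC SA SB, x p ∉ G.tree q)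
    (hS : ∀ p ∈ S, ∃ t ∈ Vm SA SB, π t = p ∧ G.E (x p) (G.vm t) ∧ G.vm t ∈ U) :
    S.ncard ≤ D.ncard := by
  have hxm : ∀ p ∈ S, ∀ t ∈ Vm SA SB, x p ≠ G.vm t := fun p hp t ht h =>
    hxt p hp _ (mem_SC_of_mem_Vm ht) (h ▸ G.vm_mem_tree t ht)
  have hex : ∀ p, ∃ d, p ∈ S → d ∈ D ∧ (d = x p ∨ ∃ t ∈ Vm SA SB, π t = p ∧ d = G.vm t) := by
    intro p
    by_cases hp : p ∈ S
    · obtain ⟨t, ht, hπ, hE, hU⟩ := hS p hp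
      rcases hD.mem_or_mem (G.isInput_of_notin_tree (hxt p hp)) hE hU with h | h
      · exact ⟨_, fun _ => ⟨h, Or.inl rfl⟩⟩
      · exact ⟨_, fun _ => ⟨h, Or.inr ⟨t, ht, hπ, rfl⟩⟩⟩
    · exact ⟨x p, fun h => absurd h hp⟩
  choose f hf using hex
  have : Finite G.V := G.finV
  refine Set.ncard_le_ncard_of_injOn f (fun p hp => (hf p hp).1) ?_ (Set.toFinite D)
  intro p hp q hq hpq
  rcases (hf p hp).2 with h | ⟨t, ht, hπt, h⟩ <;>
    rcases (hf q hq).2 with h' | ⟨s, hs, hπs, h'⟩ <;> rw [h, h'] at hpq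
  · exact hx hp hq hpq
  · exact absurd hpq (hxm p hp s hs)
  · exact absurd hpq.symm (hxm q hq t ht)
  · rw [← hπt, ← hπs, G.vm_inj ht hs hpq]

end SpGEMMDag

/-- For any member `(V,E)` of `𝒢(A,B)`, any `U ⊆ V`, and any
dominator set `D` of `U`:
`|D| ≥ max(|{(i,k) ∈ S_A : ∃j, v_{ikj} ∈ U}|, |{(k,j) ∈ S_B : ∃i, v_{ikj} ∈ U}|)`. -/
theorem dominator_lower_bound
    (SA SB : Set (ℕ × ℕ)) (G : SpGEMMDag SA SB)
    (U D : Set G.V) (hD : G.IsDominator U D) :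
    max ({p ∈ SA | ∃ j, (p.1, p.2, j) ∈ Vm SA SB ∧ G.vm (p.1, p.2, j) ∈ U}.ncard)
        ({q ∈ SB | ∃ i, (i, q.1, q.2) ∈ Vm SA SB ∧ G.vm (i, q.1, q.2) ∈ U}.ncard)
      ≤ D.ncard := by
  refine max_le ?_ ?_
  · refine hD.ncard_le G.vA (fun t => (t.1, t.2.1)) (G.vA_inj.mono fun p hp => hp.1)
      (fun p hp => G.vA_notin_tree p hp.1) ?_
    rintro p ⟨-, j, hm, hU⟩
    exact ⟨_, hm, rfl, (G.edge_iff _ _).2 (Or.inl ⟨_, hm, Or.inl rfl, rfl⟩), hU⟩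
  · refine hD.ncard_le G.vB (fun t => (t.2.1, t.2.2)) (G.vB_inj.mono fun p hp => hp.1)
      (fun p hp => G.vB_notin_tree p hp.1) ?_
    rintro q ⟨-, i, hm, hU⟩
    exact ⟨_, hm, rfl, (G.edge_iff _ _).2 (Or.inl ⟨_, hm, Or.inr rfl, rfl⟩), hU⟩
end

section
/- Let (V,E) be any member of the SpGEMM DAG family 𝒢(A,B) and let U ⊆ V. Let M_U = {u ∈ U : no out-neighbor (successor) of u in (V,E) lies in U} be the minimum set of U. Then |M_U| ≥ |{(i,j) ∈ S_C : ∃k, v_{ikj} ∈ U}|. -/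
/-- Successors of a summation-tree vertex lie in the same summation tree. -/
theorem SpGEMMDag.mem_tree_of_edge {SA SB : Set (ℕ × ℕ)} (G : SpGEMMDag SA SB)
    {p : ℕ × ℕ} (hp : p ∈ SC SA SB) {u v : G.V} (hu : u ∈ G.tree p) (huv : G.E u v) :
    v ∈ G.tree p := by
  rcases (G.edge_iff u v).1 huv with ⟨t, ht, rfl | rfl, -⟩ | ⟨q, hq⟩
  · exact absurd hu (G.vA_notin_tree _ ht.1 p hp)
  · exact absurd hu (G.vB_notin_tree _ ht.2 p hp)
  · obtain ⟨hqS, huq, hvq⟩ := G.treeE_mem q u v hq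
    obtain rfl : p = q := by
      by_contra hne
      exact Set.disjoint_left.1 (G.trees_disjoint p hp q hqS hne) hu huq
    exact hvq

/-- The reversed edge relation of the DAG is well-founded. -/
theorem SpGEMMDag.wellFounded_swap {SA SB : Set (ℕ × ℕ)} (G : SpGEMMDag SA SB) :
    WellFounded (Function.swap G.E) := by
  have := G.finV
  have : Std.Irrefl (Relation.TransGen (Function.swap G.E)) :=
    ⟨fun v hv => G.acyclic v (Relation.transGen_swap.1 hv)⟩
  exact Subrelation.wf (fun h => Relation.TransGen.single h)
    (Finite.wellFounded_of_trans_of_irrefl (Relation.TransGen (Function.swap G.E)))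

/-- If `U` meets a summation tree, so does its minimum set. -/
theorem SpGEMMDag.exists_mem_minSet_mem_tree {SA SB : Set (ℕ × ℕ)} (G : SpGEMMDag SA SB)
    (U : Set G.V) {p : ℕ × ℕ} (hp : p ∈ SC SA SB) (h : (U ∩ G.tree p).Nonempty) :
    ∃ u ∈ G.minSet U, u ∈ G.tree p := by
  obtain ⟨u, ⟨huU, hut⟩, hmin⟩ := G.wellFounded_swap.has_min _ h
  exact ⟨u, ⟨huU, fun v huv hvU => hmin v ⟨hvU, G.mem_tree_of_edge hp hut huv⟩ huv⟩, hut⟩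

/-- For any member `(V,E)` of `𝒢(A,B)` and any `U ⊆ V`, the
minimum set `M_U` of `U` satisfies
`|M_U| ≥ |{(i,j) ∈ S_C : ∃k, v_{ikj} ∈ U}|`. -/
theorem minimum_set_lower_bound
    (SA SB : Set (ℕ × ℕ)) (G : SpGEMMDag SA SB) (U : Set G.V) :
    ({p ∈ SC SA SB | ∃ k, (p.1, k, p.2) ∈ Vm SA SB ∧ G.vm (p.1, k, p.2) ∈ U}.ncard)
      ≤ (G.minSet U).ncard := by
  have := G.finV
  have key : ∀ p ∈ {p ∈ SC SA SB | ∃ k, (p.1, k, p.2) ∈ Vm SA SB ∧ G.vm (p.1, k, p.2) ∈ U},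
      ∃ u ∈ G.minSet U, u ∈ G.tree p := fun p ⟨hp, k, hk, hkU⟩ =>
    G.exists_mem_minSet_mem_tree U hp ⟨_, hkU, G.vm_mem_tree _ hk⟩
  have : Nonempty G.V := ⟨G.root (0, 0)⟩
  choose! f hfmin hftree using key
  refine Set.ncard_le_ncard_of_injOn f hfmin (fun p hp q hq hpq => ?_) (Set.toFinite _)
  by_contra hne
  exact Set.disjoint_left.1 (G.trees_disjoint p hp.1 q hq.1 hne) (hftree p hp)
    (hpq ▸ hftree q hq)
end
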